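/- (Lemma 4.1 of the paper.) Let (h_i)_{i≥1} be a sequence of smooth functions ℝ → ℝ, each with compact support contained in the open half-line (0,∞) and each not identically zero. For i ≥ 1 and a ∈ ℂ define λ_i(a) = ∫_{[0,∞)} h_i(x)·exp(−a·x) dx − a·∫_{[0,∞)} h_i'(x)·exp(−a·x) dx (for real a > 0 this is the H¹([0,∞))-inner product of h_i with x ↦ exp(−a·x)). Then each λ_i is an entire function of a, the set A = {a ∈ ℂ : λ_i(a) = 0 for some i ≥ 1} is countable, and consequently there exists a real number a > 0 such that λ_i(a) ≠ 0 for every i ≥ 1. -/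

import Mathlib

open MeasureTheory Filter Topology in
/-- The Laplace transform over `[0,∞)` of a compactly supported continuous function is entire. -/
theorem laplace_differentiable (f : ℝ → ℝ) (hf : Continuous f) (hc : HasCompactSupport f) :
    Differentiable ℂ (fun a : ℂ => ∫ x in Set.Ici (0 : ℝ), (f x : ℂ) * Complex.exp (-a * x)) := by
  intro a₀
  have hcC : HasCompactSupport (fun x : ℝ => (f x : ℂ)) :=
    hc.comp_left (g := fun y : ℝ => (y : ℂ)) (by simp)
  have hfC : Continuous (fun x : ℝ => (f x : ℂ)) := Complex.continuous_ofReal.comp hf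
  have hm1 : ∀ a : ℂ, Continuous (fun x : ℝ => (f x : ℂ) * Complex.exp (-a * x)) := by
    intro a
    fun_prop
  have hm2 : Continuous
      (fun x : ℝ => (f x : ℂ) * (Complex.exp (-a₀ * x) * (-(x : ℂ)))) := by
    fun_prop
  have hi1 : Integrable (fun x : ℝ => (f x : ℂ) * Complex.exp (-a₀ * x)) :=
    (hm1 a₀).integrable_of_hasCompactSupport hcC.mul_right
  have hca : HasCompactSupport (fun x : ℝ => |f x|) :=
    hc.comp_left (g := fun y : ℝ => |y|) (by simp)
  have hm3 : Continuous (fun x : ℝ => |f x| * (Real.exp ((‖a₀‖ + 1) * |x|) * |x|)) := by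
    fun_prop
  have hi3 : Integrable (fun x : ℝ => |f x| * (Real.exp ((‖a₀‖ + 1) * |x|) * |x|)) :=
    hm3.integrable_of_hasCompactSupport hca.mul_right
  have hb : ∀ x : ℝ, ∀ a ∈ Metric.ball a₀ 1,
      ‖(f x : ℂ) * (Complex.exp (-a * x) * (-(x : ℂ)))‖
        ≤ |f x| * (Real.exp ((‖a₀‖ + 1) * |x|) * |x|) := by
    intro x a ha
    have h1 : ‖a‖ ≤ ‖a₀‖ + 1 := by
      have h2 : ‖a - a₀‖ < 1 := by simpa [dist_eq_norm] using ha
      have h3 := norm_add_le (a - a₀) a₀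
      rw [sub_add_cancel] at h3
      linarith
    have h4 : (-a * (x : ℂ)).re ≤ (‖a₀‖ + 1) * |x| := by
      calc (-a * (x : ℂ)).re ≤ ‖-a * (x : ℂ)‖ := Complex.re_le_norm _
        _ = ‖a‖ * |x| := by simp
        _ ≤ _ := by gcongr
    rw [norm_mul, norm_mul, norm_neg, Complex.norm_real, Complex.norm_real, Complex.norm_exp,
      Real.norm_eq_abs, Real.norm_eq_abs]
    gcongr
  have hd : ∀ x : ℝ, ∀ a ∈ Metric.ball a₀ 1,
      HasDerivAt (fun a : ℂ => (f x : ℂ) * Complex.exp (-a * x))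
        ((f x : ℂ) * (Complex.exp (-a * x) * (-(x : ℂ)))) a := by
    intro x a _
    have h1 : HasDerivAt (fun a : ℂ => -a * (x : ℂ)) (-(x : ℂ)) a := by
      simpa using (hasDerivAt_id a).neg.mul_const (x : ℂ)
    exact h1.cexp.const_mul _
  have key := hasDerivAt_integral_of_dominated_loc_of_deriv_le (𝕜 := ℂ)
    (μ := volume.restrict (Set.Ici (0 : ℝ)))
    (F := fun (a : ℂ) (x : ℝ) => (f x : ℂ) * Complex.exp (-a * x))
    (F' := fun (a : ℂ) (x : ℝ) => (f x : ℂ) * (Complex.exp (-a * x) * (-(x : ℂ))))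
    (bound := fun x : ℝ => |f x| * (Real.exp ((‖a₀‖ + 1) * |x|) * |x|))
    (x₀ := a₀) (s := Metric.ball a₀ 1) (Metric.ball_mem_nhds a₀ one_pos)
    (Eventually.of_forall fun a => (hm1 a).aestronglyMeasurable)
    hi1.integrableOn hm2.aestronglyMeasurable (Eventually.of_forall hb)
    hi3.integrableOn (Eventually.of_forall hd)
  exact key.2.differentiableAt

open MeasureTheory Filter Topology in
theorem countable_zeros (f : ℂ → ℂ) (hf : Differentiable ℂ f) (hne : ∃ a, f a ≠ 0) :
    {a : ℂ | f a = 0}.Countable := by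
  have han : AnalyticOnNhd ℂ f Set.univ := fun z _ => hf.analyticAt z
  rcases han.eqOn_zero_or_eventually_ne_zero_of_preconnected isPreconnected_univ with h | h
  · obtain ⟨a, ha⟩ := hne
    exact absurd (h (Set.mem_univ a)) ha
  · have h2 : {a : ℂ | f a = 0}ᶜ ∈ codiscreteWithin (Set.univ : Set ℂ) := h
    have h3 := isDiscrete_of_codiscreteWithin h2
    rw [Set.inter_univ] at h3
    exact (HereditarilyLindelofSpace.isLindelof _).countable h3.to_subtype

open MeasureTheory Filter Topology FourierTransform Complex in
theorem lambda_not_zero (f : ℝ → ℝ) (hs : ContDiff ℝ (⊤ : ℕ∞) f) (hc : HasCompactSupport f)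
    (hsupp : tsupport f ⊆ Set.Ioi (0 : ℝ)) (hne : ∃ x, f x ≠ 0) :
    ∃ a : ℂ, (∫ x in Set.Ici (0 : ℝ), (f x : ℂ) * Complex.exp (-a * x)) -
        a * ∫ x in Set.Ici (0 : ℝ), ((deriv f x : ℝ) : ℂ) * Complex.exp (-a * x) ≠ 0 := by
  by_contra! hzero
  let g : ℝ → ℂ := fun x => (f x : ℂ)
  have hcg : HasCompactSupport g :=
    hc.comp_left (g := fun y : ℝ => (y : ℂ)) (by simp)
  have hgc : Continuous g := Complex.continuous_ofReal.comp hs.continuous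
  have hdf : Differentiable ℝ f := hs.differentiable (by simp)
  have hgd : ∀ x, HasDerivAt g ((deriv f x : ℝ) : ℂ) x := fun x =>
    (hdf x).hasDerivAt.ofReal_comp
  have hgd' : deriv g = fun x => ((deriv f x : ℝ) : ℂ) := funext fun x => (hgd x).deriv
  have hdc : Continuous (deriv g) := by
    rw [hgd']
    exact Complex.continuous_ofReal.comp (hs.continuous_deriv (by simp))
  have hgi : Integrable g := hgc.integrable_of_hasCompactSupport hcg
  have hdi : Integrable (deriv g) := hdc.integrable_of_hasCompactSupport hcg.deriv
  have hF := Real.fourier_deriv hgi (fun x => (hgd x).differentiableAt) hdi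
  have hset : ∀ (u : ℝ → ℝ), tsupport u ⊆ tsupport f → ∀ t : ℝ,
      (∫ x in Set.Ici (0 : ℝ), (u x : ℂ) * Complex.exp (-(2 * Real.pi * I * t) * x))
        = 𝓕 (fun x => (u x : ℂ)) t := by
    intro u hu t
    rw [setIntegral_eq_integral_of_forall_compl_eq_zero, Real.fourier_real_eq_integral_exp_smul]
    · congr 1 with x
      rw [smul_eq_mul, mul_comm]
      congr 2
      push_cast
      ring
    · intro x hx
      have : u x = 0 := by
        apply image_eq_zero_of_notMem_tsupport
        intro h
        exact hx (Set.mem_Ici.2 (le_of_lt (hsupp (hu h))))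
      simp [this]
  have hFz : 𝓕 g = 0 := by
    ext t
    have h1 := hzero (2 * Real.pi * I * t)
    rw [hset f subset_rfl, hset (deriv f) (closure_minimal (support_deriv_subset) (isClosed_tsupport f)),
      ← hgd', hF] at h1
    change 𝓕 g t - 2 * Real.pi * I * t * ((2 * Real.pi * I * t) • 𝓕 g t) = 0 at h1
    have h2 : ((1 + (2 * Real.pi * t) ^ 2 : ℝ) : ℂ) * 𝓕 g t = 0 := by
      rw [← h1, smul_eq_mul]
      push_cast
      linear_combination ((2 * Real.pi * t) ^ 2 * 𝓕 g t) * Complex.I_sq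
    have h3 : ((1 + (2 * Real.pi * t) ^ 2 : ℝ) : ℂ) ≠ 0 := by
      rw [Complex.ofReal_ne_zero]
      positivity
    exact (mul_eq_zero.1 h2).resolve_left h3
  have hinv := hgc.fourierInv_fourier_eq hgi (by rw [hFz]; exact integrable_zero _ _ _)
  obtain ⟨x, hx⟩ := hne
  apply hx
  have : g x = 0 := by
    rw [← hinv, hFz]
    simp [Real.fourierInv_eq]
  simpa [g] using this

/-- Lemma 4.1 of the paper: for a sequence `(h_i)_{i≥1}` of smooth,
compactly supported (in `(0,∞)`), not identically vanishing functions, the functions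
`λ_i(a) = ∫_{[0,∞)} h_i e^{−ax} − a ∫_{[0,∞)} h_i' e^{−ax}` are entire, the set of
`a ∈ ℂ` where some `λ_i` vanishes is countable, and hence some real `a > 0` is a zero
of no `λ_i`. -/
theorem exists_a_lambda_ne_zero (h : ℕ → ℝ → ℝ)
    (hsmooth : ∀ i, 1 ≤ i → ContDiff ℝ (⊤ : ℕ∞) (h i))
    (hsupp : ∀ i, 1 ≤ i → HasCompactSupport (h i))
    (hsupp' : ∀ i, 1 ≤ i → tsupport (h i) ⊆ Set.Ioi (0 : ℝ))
    (hne : ∀ i, 1 ≤ i → ∃ x : ℝ, h i x ≠ 0)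
    (lam : ℕ → ℂ → ℂ)
    (hlam : ∀ i, 1 ≤ i → ∀ a : ℂ, lam i a =
      (∫ x in Set.Ici (0 : ℝ), (h i x : ℂ) * Complex.exp (-a * x)) -
        a * ∫ x in Set.Ici (0 : ℝ), ((deriv (h i) x : ℝ) : ℂ) * Complex.exp (-a * x)) :
    (∀ i, 1 ≤ i → Differentiable ℂ (lam i)) ∧
    Set.Countable {a : ℂ | ∃ i, 1 ≤ i ∧ lam i a = 0} ∧
    ∃ a : ℝ, 0 < a ∧ ∀ i, 1 ≤ i → lam i (a : ℂ) ≠ 0 := by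
  have hdiff : ∀ i, 1 ≤ i → Differentiable ℂ (lam i) := by
    intro i hi
    rw [show lam i = _ from funext (hlam i hi)]
    exact (laplace_differentiable _ (hsmooth i hi).continuous (hsupp i hi)).sub
      (differentiable_id.mul (laplace_differentiable _
        ((hsmooth i hi).continuous_deriv (by simp)) (hsupp i hi).deriv))
  have hcount : Set.Countable {a : ℂ | ∃ i, 1 ≤ i ∧ lam i a = 0} := by
    have h1 : {a : ℂ | ∃ i, 1 ≤ i ∧ lam i a = 0} =
        ⋃ i ∈ {i : ℕ | 1 ≤ i}, {a : ℂ | lam i a = 0} := by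
      ext a
      simp
    rw [h1]
    refine (Set.to_countable _).biUnion fun i hi => countable_zeros _ (hdiff i hi) ?_
    obtain ⟨a, ha⟩ := lambda_not_zero _ (hsmooth i hi) (hsupp i hi) (hsupp' i hi) (hne i hi)
    exact ⟨a, by rw [hlam i hi]; exact ha⟩
  refine ⟨hdiff, hcount, ?_⟩
  by_contra! hcon
  have h2 : (Set.Ioi (0 : ℝ)).Countable := by
    refine (hcount.preimage Complex.ofReal_injective).mono fun a ha => ?_
    exact hcon a ha
  have h3 := h2.measure_zero MeasureTheory.volume
  simp at h3
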